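/- arXiv:0704.2391 — 11 statements merged into one kernel-verified Lean document; each statement's English description precedes it below -/
import Mathlib

section
/- Let η, α0, α1, α2, α3, α4 be complex numbers with α0+α1+2α2+α3+α4 = 1. Then the polynomial identity P1 + P2 = (x-y)(x-y+1)(x-y+1-η)(x-y-η) holds in ℂ[x,y,z]. (Consequently, along any solution of the system of type D4^(1), the difference u = x-y satisfies du/dt = (b(t)/(2η))·u(u+1)(u+1-η)(u-η), i.e. the system has this first integral.) -/
noncomputable section
open MvPolynomial

/-- Right-hand side polynomial `P1` of the system of type `D₄⁽¹⁾`. -/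
def P1 {R : Type*} [CommRing R] (eta a0 a1 a2 a3 a4 x y z : R) : R :=
  -2*x*(y-1)*y*z*(x-eta)*(2*x-2*y+1-eta)
  - 2*(2*a0+2*a1+4*a2+a3+a4)*x^3*y
  - 2*(a0+a1)*x*y^3
  + (5*a0+5*a1+6*a2+a3+a4)*x^2*y^2
  - (5*a0+5*a1+6*a2+2*a3 - 3*(2*a0+2*a1+4*a2+a3+a4)*eta)*x^2*y
  + (3*(a0+a1) - (4*a0+6*a1+6*a2+a3+a4)*eta)*x*y^2
  + x^4
  + 2*(a0+a1+2*a2+a3-eta)*x^3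
  + 2*a1*eta*y^3
  + ((a0+a1+2*a2+a3)*(eta^2-3*eta+1) + a4*eta^2)*x^2
  + a1*(eta-3)*eta*y^2
  + (-(a0+a1) + 2*(2*a0+3*a1+3*a2+a3)*eta - (2*a0+2*a1+4*a2+a3+a4)*eta^2)*x*y
  + (a0+a1+2*a2+a3)*(eta-1)*eta*x
  - a1*(eta-1)*eta*y

/-- Right-hand side polynomial `P2` of the system of type `D₄⁽¹⁾`. -/
def P2 {R : Type*} [CommRing R] (eta a0 a1 a2 a3 a4 x y z : R) : R :=
  2*x*(y-1)*y*z*(x-eta)*(2*x-2*y+1-eta)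
  - 2*(a3+a4)*x^3*y
  - 2*(a0+a1+4*a2+2*a3+2*a4)*x*y^3
  + (a0+a1+6*a2+5*a3+5*a4)*x^2*y^2
  + (-(a0+a1+6*a2+4*a3+6*a4) + 3*(a3+a4)*eta)*x^2*y
  + (3*(a0+a1+4*a2+2*a3+2*a4) - (2*a0+6*a2+5*a3+5*a4)*eta)*x*y^2
  + y^4
  + 2*a4*x^3
  + 2*((a0+2*a2+a3+a4)*eta - 1)*y^3
  - a4*(3*eta-1)*x^2
  + (1 - 3*(a0+2*a2+a3+a4)*eta + (a0+2*a2+a3+a4)*eta^2)*y^2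
  + (-(a0+a1+4*a2+2*a3+2*a4) + 2*(a0+3*a2+2*a3+3*a4)*eta - (a3+a4)*eta^2)*x*y
  + a4*(eta-1)*eta*x
  - (a0+2*a2+a3+a4)*(eta-1)*eta*y

/-- if `α0+α1+2α2+α3+α4 = 1`, then the polynomial identity
`P1 + P2 = (x-y)(x-y+1)(x-y+1-η)(x-y-η)` holds in `ℂ[x,y,z]`
(so that `u = x - y` satisfies `du/dt = (b(t)/(2η))·u(u+1)(u+1-η)(u-η)` along solutions). -/
theorem statement0 (eta a0 a1 a2 a3 a4 : ℂ)
    (hsum : a0 + a1 + 2*a2 + a3 + a4 = 1) :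
    P1 (C eta) (C a0) (C a1) (C a2) (C a3) (C a4)
        (X 0 : MvPolynomial (Fin 3) ℂ) (X 1) (X 2)
      + P2 (C eta) (C a0) (C a1) (C a2) (C a3) (C a4) (X 0) (X 1) (X 2)
      = (X 0 - X 1) * (X 0 - X 1 + 1) * (X 0 - X 1 + 1 - C eta) * (X 0 - X 1 - C eta) := by
  have h : (C a0 + C a1 + 2 * C a2 + C a3 + C a4 : MvPolynomial (Fin 3) ℂ) = 1 := by
    simpa [show (C 2 : MvPolynomial (Fin 3) ℂ) = 2 from map_ofNat C 2] using
      congrArg (C : ℂ → MvPolynomial (Fin 3) ℂ) hsum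
  generalize (X 0 : MvPolynomial (Fin 3) ℂ) = x
  generalize (X 1 : MvPolynomial (Fin 3) ℂ) = y
  generalize (C eta : MvPolynomial (Fin 3) ℂ) = e at *
  unfold P1 P2
  -- The `z`-terms cancel, and the `αᵢ` enter the sum only through `α0+α1+2α2+α3+α4`;
  -- the multiplier below is the coefficient of that combination in `P1 + P2`.
  linear_combination
    (-4*x^3*y - 4*x*y^3 + 6*x^2*y^2 - (6 - 6*e)*x^2*y + (6 - 6*e)*x*y^2 + 2*x^3 + 2*e*y^3
      + (e^2 - 3*e + 1)*x^2 + (e^2 - 3*e)*y^2 + (-2 + 6*e - 2*e^2)*x*y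
      + (e^2 - e)*(x - y)) * h
end
end

section
/- Let η, α0, α1, α2, α3, α4 be complex numbers. If α3 = 0, then the polynomial P2 is divisible by (y-1) in ℂ[x,y,z]; if α4 = 0, then P2 is divisible by y in ℂ[x,y,z]. (These express that y-1 = 0 and y = 0 are invariant divisors of the system of type D4^(1) when α3 = 0, respectively α4 = 0.) -/
/-!
`P2` vanishes identically on `y = 1` when `α3 = 0` and on `y = 0` when `α4 = 0`. Both divisibilities
hold over any commutative ring, with the explicit cofactors of `sub_one_dvd_P2` and `dvd_P2`.
-/

noncomputable section
open MvPolynomial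

/-- For `α3 = 0` the coefficient of each power of `x` in `P2` vanishes at `y = 1`; the cofactor is
listed as the `z`-part followed by the quotients of the coefficients of `x^3`, `x^2`, `x`, `1`. -/
lemma sub_one_dvd_P2 {R : Type*} [CommRing R] (eta a0 a1 a2 a4 x y z : R) :
    (y - 1) ∣ P2 eta a0 a1 a2 0 a4 x y z := by
  refine ⟨2*x*y*z*(x-eta)*(2*x-2*y+1-eta)
    - 2*a4*x^3
    + ((a0+a1+6*a2+5*a4)*y + a4*(3*eta-1))*x^2
    + (-2*(a0+a1+4*a2+2*a4)*y^2 + ((a0+a1+4*a2+2*a4) - (2*a0+6*a2+5*a4)*eta)*y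
        - a4*(eta-1)*eta)*x
    + y*(y^2 + (2*(a0+2*a2+a4)*eta - 1)*y + (a0+2*a2+a4)*(eta-1)*eta), ?_⟩
  unfold P2
  ring

/-- The terms of `P2` free of `y` are all multiples of `α4`; for `α4 = 0` the cofactor is read off
term by term. -/
lemma dvd_P2 {R : Type*} [CommRing R] (eta a0 a1 a2 a3 x y z : R) :
    y ∣ P2 eta a0 a1 a2 a3 0 x y z := by
  refine ⟨2*x*(y-1)*z*(x-eta)*(2*x-2*y+1-eta)
    - 2*a3*x^3
    - 2*(a0+a1+4*a2+2*a3)*x*y^2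
    + (a0+a1+6*a2+5*a3)*x^2*y
    + (-(a0+a1+6*a2+4*a3) + 3*a3*eta)*x^2
    + (3*(a0+a1+4*a2+2*a3) - (2*a0+6*a2+5*a3)*eta)*x*y
    + y^3
    + 2*((a0+2*a2+a3)*eta - 1)*y^2
    + (1 - 3*(a0+2*a2+a3)*eta + (a0+2*a2+a3)*eta^2)*y
    + (-(a0+a1+4*a2+2*a3) + 2*(a0+3*a2+2*a3)*eta - a3*eta^2)*x
    - (a0+2*a2+a3)*(eta-1)*eta, ?_⟩
  unfold P2
  ring

/-- if `α3 = 0` then `(y - 1) ∣ P2` in `ℂ[x,y,z]`, and if `α4 = 0`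
then `y ∣ P2` in `ℂ[x,y,z]` (invariant divisors of the system of type `D₄⁽¹⁾`). -/
theorem statement2 (eta a0 a1 a2 a3 a4 : ℂ) :
    (a3 = 0 →
      (X 1 - 1 : MvPolynomial (Fin 3) ℂ) ∣
        P2 (C eta) (C a0) (C a1) (C a2) (C a3) (C a4) (X 0) (X 1) (X 2)) ∧
    (a4 = 0 →
      (X 1 : MvPolynomial (Fin 3) ℂ) ∣
        P2 (C eta) (C a0) (C a1) (C a2) (C a3) (C a4) (X 0) (X 1) (X 2)) := by
  refine ⟨?_, ?_⟩
  · rintro rfl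
    rw [C_0]
    exact sub_one_dvd_P2 ..
  · rintro rfl
    rw [C_0]
    exact dvd_P2 ..
end
end

section
/- The system (S) admits the following Bäcklund transformations of affine Weyl group type D4^(1): if (x,y,z) is a solution of (S) with parameters (α0,α1,α2,α3,α4) (on an interval where the indicated denominators do not vanish), then: (s0) (x, y, z - α0/(x-η)) is a solution of (S) with parameters (-α0, α1, α2+α0, α3, α4); (s1) (x, y, z - α1/x) is a solution with parameters (α0, -α1, α2+α1, α3, α4); (s2) (x + α2/z, y + α2/z, z) is a solution with parameters (α0+α2, α1+α2, -α2, α3+α2, α4+α2); (s3) (x, y, z - α3/(y-1)) is a solution with parameters (α0, α1, α2+α3, -α3, α4); (s4) (x, y, z - α4/y) is a solution with parameters (α0, α1, α2+α4, α3, -α4). -/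
/-!
Each `sᵢ` is a rational change of variables involving a single quotient `q`: `q = αᵢ / f` with `f`
one of `x - η`, `x`, `y - 1`, `y` for `i = 0, 1, 3, 4` (where `z` becomes `z - q`), and `q = α₂ / z`
for `i = 2` (where `x`, `y` become `x + q`, `y + q`). The quotient rule gives `q' = -q f' / f`, so
that the claim is an identity between rational functions of `x, y, z` and the parameters. Replacing
the parameter `αᵢ` by `q f` makes both sides polynomial after one multiplication by `f`, and
eliminating one further parameter through `α₀ + α₁ + 2α₂ + α₃ + α₄ = 1` turns the claim into
polynomial identities over `ℤ`, valid in every commutative ring: these are the lemmas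
`s0_identities`, …, `s4_identities`. The lemma `hasDerivAt_const_div` carries the analytic part.
-/

noncomputable section

/-- Right-hand side polynomial `P3` of the system of type `D₄⁽¹⁾`. -/
def P3 {R : Type*} [CommRing R] (eta a0 a1 a2 a3 a4 x y z : R) : R :=
  (2*x-2*y+1-eta)*(2*x^2*y + 2*x*y^2 - x^2 - eta*y^2 - 2*(eta+1)*x*y + eta*(x+y))*z^2
  + z*( -2*(a3+a4)*x^3 + 2*(a0+a1)*y^3 + 2*(a0+a1+6*a2+2*a3+2*a4)*x^2*y
      - 2*(2*a0+2*a1+6*a2+a3+a4)*x*y^2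
      + (-(a0+a1+6*a2+4*a3) + 3*(a3+a4)*eta)*x^2
      + (-3*(a0+a1) + (4*a0+6*a2+a3+a4)*eta)*y^2
      - 4*(-(a0+a1+3*a2+a3) + (a0+3*a2+a3+a4)*eta)*x*y
      + (-(a0+a1+4*a2+2*a3) + 2*(a0+3*a2+2*a3)*eta - (a3+a4)*eta^2)*x
      + (a0+a1 - 2*(2*a0+3*a2+a3)*eta + (2*a0+4*a2+a3+a4)*eta^2)*y
      - (a0+2*a2+a3)*(eta-1)*eta )
  + a2*( (a0+a1+2*a2-a3-a4)*x^2 + (a0+a1-2*a2-a3-a4)*y^2 - 2*(a0+a1-a3-a4)*x*y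
       + (a0+a1-2*a3 - (2*a0+2*a2-a3-a4)*eta)*x
       + (-a0-a1+2*a2+2*a3 + (2*a0-a3-a4)*eta)*y
       + (eta-1)*(a2+a3+(a0+a2)*eta) )

/-- `(x, y, z)` is a solution of the system (S) of type `D₄⁽¹⁾` on the set `I`:
`(2η/b(t))·x' = P1`, `-(2η/b(t))·y' = P2`, `(2η/b(t))·z' = P3`. -/
def IsSolD4 (I : Set ℝ) (b : ℝ → ℂ) (eta a0 a1 a2 a3 a4 : ℂ) (x y z : ℝ → ℂ) : Prop :=
  ∀ t ∈ I,
    HasDerivAt x (b t / (2*eta) * P1 eta a0 a1 a2 a3 a4 (x t) (y t) (z t)) t ∧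
    HasDerivAt y (-(b t / (2*eta)) * P2 eta a0 a1 a2 a3 a4 (x t) (y t) (z t)) t ∧
    HasDerivAt z (b t / (2*eta) * P3 eta a0 a1 a2 a3 a4 (x t) (y t) (z t)) t

lemma s0_identities {R : Type*} [CommRing R] {eta a0 a1 a2 a3 a4 x y z q : R}
    (hsum : a0 + a1 + 2*a2 + a3 + a4 = 1) (hq : q * (x - eta) = a0) :
    P1 eta (-a0) a1 (a2+a0) a3 a4 x y (z - q) = P1 eta a0 a1 a2 a3 a4 x y z ∧
    P2 eta (-a0) a1 (a2+a0) a3 a4 x y (z - q) = P2 eta a0 a1 a2 a3 a4 x y z ∧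
    P3 eta (-a0) a1 (a2+a0) a3 a4 x y (z - q) * (x - eta) =
      P3 eta a0 a1 a2 a3 a4 x y z * (x - eta) + q * P1 eta a0 a1 a2 a3 a4 x y z := by
  obtain rfl : a4 = 1 - a0 - a1 - 2*a2 - a3 := by linear_combination hsum
  subst hq
  refine ⟨?_, ?_, ?_⟩ <;> simp only [P1, P2, P3] <;> ring

lemma s1_identities {R : Type*} [CommRing R] {eta a0 a1 a2 a3 a4 x y z q : R}
    (hsum : a0 + a1 + 2*a2 + a3 + a4 = 1) (hq : q * x = a1) :
    P1 eta a0 (-a1) (a2+a1) a3 a4 x y (z - q) = P1 eta a0 a1 a2 a3 a4 x y z ∧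
    P2 eta a0 (-a1) (a2+a1) a3 a4 x y (z - q) = P2 eta a0 a1 a2 a3 a4 x y z ∧
    P3 eta a0 (-a1) (a2+a1) a3 a4 x y (z - q) * x =
      P3 eta a0 a1 a2 a3 a4 x y z * x + q * P1 eta a0 a1 a2 a3 a4 x y z := by
  obtain rfl : a4 = 1 - a0 - a1 - 2*a2 - a3 := by linear_combination hsum
  subst hq
  refine ⟨?_, ?_, ?_⟩ <;> simp only [P1, P2, P3] <;> ring

lemma s2_identities {R : Type*} [CommRing R] {eta a0 a1 a2 a3 a4 x y z q : R}
    (hsum : a0 + a1 + 2*a2 + a3 + a4 = 1) (hq : q * z = a2) :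
    P1 eta (a0+a2) (a1+a2) (-a2) (a3+a2) (a4+a2) (x + q) (y + q) z * z =
      P1 eta a0 a1 a2 a3 a4 x y z * z - q * P3 eta a0 a1 a2 a3 a4 x y z ∧
    P2 eta (a0+a2) (a1+a2) (-a2) (a3+a2) (a4+a2) (x + q) (y + q) z * z =
      P2 eta a0 a1 a2 a3 a4 x y z * z + q * P3 eta a0 a1 a2 a3 a4 x y z ∧
    P3 eta (a0+a2) (a1+a2) (-a2) (a3+a2) (a4+a2) (x + q) (y + q) z = P3 eta a0 a1 a2 a3 a4 x y z := by
  obtain rfl : a4 = 1 - a0 - a1 - 2*a2 - a3 := by linear_combination hsum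
  subst hq
  refine ⟨?_, ?_, ?_⟩ <;> simp only [P1, P2, P3] <;> ring

lemma s3_identities {R : Type*} [CommRing R] {eta a0 a1 a2 a3 a4 x y z q : R}
    (hsum : a0 + a1 + 2*a2 + a3 + a4 = 1) (hq : q * (y - 1) = a3) :
    P1 eta a0 a1 (a2+a3) (-a3) a4 x y (z - q) = P1 eta a0 a1 a2 a3 a4 x y z ∧
    P2 eta a0 a1 (a2+a3) (-a3) a4 x y (z - q) = P2 eta a0 a1 a2 a3 a4 x y z ∧
    P3 eta a0 a1 (a2+a3) (-a3) a4 x y (z - q) * (y - 1) =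
      P3 eta a0 a1 a2 a3 a4 x y z * (y - 1) - q * P2 eta a0 a1 a2 a3 a4 x y z := by
  obtain rfl : a4 = 1 - a0 - a1 - 2*a2 - a3 := by linear_combination hsum
  subst hq
  refine ⟨?_, ?_, ?_⟩ <;> simp only [P1, P2, P3] <;> ring

lemma s4_identities {R : Type*} [CommRing R] {eta a0 a1 a2 a3 a4 x y z q : R}
    (hsum : a0 + a1 + 2*a2 + a3 + a4 = 1) (hq : q * y = a4) :
    P1 eta a0 a1 (a2+a4) a3 (-a4) x y (z - q) = P1 eta a0 a1 a2 a3 a4 x y z ∧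
    P2 eta a0 a1 (a2+a4) a3 (-a4) x y (z - q) = P2 eta a0 a1 a2 a3 a4 x y z ∧
    P3 eta a0 a1 (a2+a4) a3 (-a4) x y (z - q) * y =
      P3 eta a0 a1 a2 a3 a4 x y z * y - q * P2 eta a0 a1 a2 a3 a4 x y z := by
  obtain rfl : a0 = 1 - a1 - 2*a2 - a3 - a4 := by linear_combination hsum
  subst hq
  refine ⟨?_, ?_, ?_⟩ <;> simp only [P1, P2, P3] <;> ring

/-- The quotient rule for `c / f`, with the derivative written through the quotient itself. -/
lemma hasDerivAt_const_div {f : ℝ → ℂ} {f' : ℂ} {t : ℝ} (c : ℂ) (hf : HasDerivAt f f' t)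
    (h : f t ≠ 0) : HasDerivAt (fun s => c / f s) (-(c / f t) * f' / f t) t := by
  refine ((hasDerivAt_const t c).fun_div hf h).congr_deriv ?_
  field_simp
  ring

/-- Bäcklund transformations `s₀,…,s₄` of affine Weyl group type `D₄⁽¹⁾`
for the system (S). -/
theorem statement4 (I : Set ℝ) (b : ℝ → ℂ) (eta a0 a1 a2 a3 a4 : ℂ)
    (heta : eta ≠ 0) (hb : ∀ t ∈ I, b t ≠ 0)
    (hsum : a0 + a1 + 2*a2 + a3 + a4 = 1)
    (x y z : ℝ → ℂ) (hsol : IsSolD4 I b eta a0 a1 a2 a3 a4 x y z) :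
    ((∀ t ∈ I, x t ≠ eta) →
      IsSolD4 I b eta (-a0) a1 (a2+a0) a3 a4
        x y (fun t => z t - a0/(x t - eta))) ∧
    ((∀ t ∈ I, x t ≠ 0) →
      IsSolD4 I b eta a0 (-a1) (a2+a1) a3 a4
        x y (fun t => z t - a1/(x t))) ∧
    ((∀ t ∈ I, z t ≠ 0) →
      IsSolD4 I b eta (a0+a2) (a1+a2) (-a2) (a3+a2) (a4+a2)
        (fun t => x t + a2/(z t)) (fun t => y t + a2/(z t)) z) ∧
    ((∀ t ∈ I, y t ≠ 1) →
      IsSolD4 I b eta a0 a1 (a2+a3) (-a3) a4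
        x y (fun t => z t - a3/(y t - 1))) ∧
    ((∀ t ∈ I, y t ≠ 0) →
      IsSolD4 I b eta a0 a1 (a2+a4) a3 (-a4)
        x y (fun t => z t - a4/(y t))) := by
  refine ⟨fun h t ht => ?_, fun h t ht => ?_, fun h t ht => ?_, fun h t ht => ?_, fun h t ht => ?_⟩
  · obtain ⟨hx, hy, hz⟩ := hsol t ht
    have hne : x t - eta ≠ 0 := sub_ne_zero.mpr (h t ht)
    obtain ⟨e1, e2, e3⟩ := s0_identities (eta := eta) (x := x t) (y := y t) (z := z t) hsum
      (div_mul_cancel₀ a0 hne)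
    have hq := hasDerivAt_const_div a0 (hx.sub_const eta) hne
    refine ⟨hx.congr_deriv ?_, hy.congr_deriv ?_, (hz.sub hq).congr_deriv ?_⟩
    · rw [e1]
    · rw [e2]
    · rw [eq_div_of_mul_eq hne e3]
      field_simp
      ring
  · obtain ⟨hx, hy, hz⟩ := hsol t ht
    have hne : x t ≠ 0 := h t ht
    obtain ⟨e1, e2, e3⟩ := s1_identities (eta := eta) (x := x t) (y := y t) (z := z t) hsum
      (div_mul_cancel₀ a1 hne)
    have hq := hasDerivAt_const_div a1 (hx) hne
    refine ⟨hx.congr_deriv ?_, hy.congr_deriv ?_, (hz.sub hq).congr_deriv ?_⟩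
    · rw [e1]
    · rw [e2]
    · rw [eq_div_of_mul_eq hne e3]
      field_simp
      ring
  · obtain ⟨hx, hy, hz⟩ := hsol t ht
    have hne : z t ≠ 0 := h t ht
    obtain ⟨e1, e2, e3⟩ := s2_identities (eta := eta) (x := x t) (y := y t) (z := z t) hsum
      (div_mul_cancel₀ a2 hne)
    have hq := hasDerivAt_const_div a2 (hz) hne
    refine ⟨(hx.add hq).congr_deriv ?_, (hy.add hq).congr_deriv ?_, hz.congr_deriv ?_⟩
    · rw [eq_div_of_mul_eq hne e1]
      field_simp
      ring
    · rw [eq_div_of_mul_eq hne e2]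
      field_simp
      ring
    · rw [e3]
  · obtain ⟨hx, hy, hz⟩ := hsol t ht
    have hne : y t - 1 ≠ 0 := sub_ne_zero.mpr (h t ht)
    obtain ⟨e1, e2, e3⟩ := s3_identities (eta := eta) (x := x t) (y := y t) (z := z t) hsum
      (div_mul_cancel₀ a3 hne)
    have hq := hasDerivAt_const_div a3 (hy.sub_const 1) hne
    refine ⟨hx.congr_deriv ?_, hy.congr_deriv ?_, (hz.sub hq).congr_deriv ?_⟩
    · rw [e1]
    · rw [e2]
    · rw [eq_div_of_mul_eq hne e3]
      field_simp
  · obtain ⟨hx, hy, hz⟩ := hsol t ht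
    have hne : y t ≠ 0 := h t ht
    obtain ⟨e1, e2, e3⟩ := s4_identities (eta := eta) (x := x t) (y := y t) (z := z t) hsum
      (div_mul_cancel₀ a4 hne)
    have hq := hasDerivAt_const_div a4 (hy) hne
    refine ⟨hx.congr_deriv ?_, hy.congr_deriv ?_, (hz.sub hq).congr_deriv ?_⟩
    · rw [e1]
    · rw [e2]
    · rw [eq_div_of_mul_eq hne e3]
      field_simp
end
end

section
/- The system (S) restricted by the parameter relation α4 = α1 admits the following Bäcklund transformation of affine Weyl group type B3^(1): if (x,y,z) is a solution of (S) with parameters (α0, α1, α2, α3, α1) (on an interval where x and y do not vanish), then (x, y, z - α1·(x+y)/(xy)) is a solution of (S) with parameters (α0, -α1, α2+2α1, α3, -α1). -/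
/-!
The new third coordinate is `w = z - a1 * (x + y) / (x * y) = z - a1 * (1 / x + 1 / y)`.  The
right-hand sides `P1` and `P2` take the same value at the old parameters and `z` as at the new
parameters and `w` (`P1_reflect`, `P2_reflect`), so the first two equations carry over unchanged.
By the chain rule `w' = z' + a1 * (x' / x ^ 2 + y' / y ^ 2)`, so the third equation amounts to the
rational identity `P3_reflect`.  The three identities are verified by eliminating `a0` through the
normalization of the parameters and clearing denominators.
-/

noncomputable section

theorem P1_reflect {eta a0 a1 a2 a3 x y : ℂ} (z : ℂ)
    (hsum : a0 + a1 + 2*a2 + a3 + a1 = 1) (hx : x ≠ 0) (hy : y ≠ 0) :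
    P1 eta a0 (-a1) (a2+2*a1) a3 (-a1) x y (z - a1*(x + y)/(x * y)) =
      P1 eta a0 a1 a2 a3 a1 x y z := by
  obtain rfl : a0 = 1 - 2*a1 - 2*a2 - a3 := by linear_combination hsum
  unfold P1
  field_simp
  ring

theorem P2_reflect {eta a0 a1 a2 a3 x y : ℂ} (z : ℂ)
    (hsum : a0 + a1 + 2*a2 + a3 + a1 = 1) (hx : x ≠ 0) (hy : y ≠ 0) :
    P2 eta a0 (-a1) (a2+2*a1) a3 (-a1) x y (z - a1*(x + y)/(x * y)) =
      P2 eta a0 a1 a2 a3 a1 x y z := by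
  obtain rfl : a0 = 1 - 2*a1 - 2*a2 - a3 := by linear_combination hsum
  unfold P2
  field_simp
  ring

/-- Up to the factor `b / (2 * eta)`, the right-hand side is the derivative of
`z - a1 * (1 / x + 1 / y)` along (S); `P2` enters with a minus sign because of the sign in the
second equation of (S). -/
theorem P3_reflect {eta a0 a1 a2 a3 x y : ℂ} (z : ℂ)
    (hsum : a0 + a1 + 2*a2 + a3 + a1 = 1) (hx : x ≠ 0) (hy : y ≠ 0) :
    P3 eta a0 (-a1) (a2+2*a1) a3 (-a1) x y (z - a1*(x + y)/(x * y)) =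
      P3 eta a0 a1 a2 a3 a1 x y z
        + a1 * (P1 eta a0 a1 a2 a3 a1 x y z / x^2 - P2 eta a0 a1 a2 a3 a1 x y z / y^2) := by
  obtain rfl : a0 = 1 - 2*a1 - 2*a2 - a3 := by linear_combination hsum
  unfold P3 P1 P2
  field_simp
  ring

/-- Bäcklund transformation `s₃` of affine Weyl group type `B₃⁽¹⁾`
for the system (S) restricted by `α₄ = α₁`. -/
theorem statement5 (I : Set ℝ) (b : ℝ → ℂ) (eta a0 a1 a2 a3 : ℂ)
    (heta : eta ≠ 0) (hb : ∀ t ∈ I, b t ≠ 0)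
    (hsum : a0 + a1 + 2*a2 + a3 + a1 = 1)
    (x y z : ℝ → ℂ) (hsol : IsSolD4 I b eta a0 a1 a2 a3 a1 x y z)
    (hx : ∀ t ∈ I, x t ≠ 0) (hy : ∀ t ∈ I, y t ≠ 0) :
    IsSolD4 I b eta a0 (-a1) (a2+2*a1) a3 (-a1)
      x y (fun t => z t - a1*(x t + y t)/(x t * y t)) := by
  intro t ht
  obtain ⟨h1, h2, h3⟩ := hsol t ht
  have hxt := hx t ht
  have hyt := hy t ht
  refine ⟨?_, ?_, ?_⟩
  · rw [P1_reflect (z t) hsum hxt hyt]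
    exact h1
  · rw [P2_reflect (z t) hsum hxt hyt]
    exact h2
  · rw [P3_reflect (z t) hsum hxt hyt]
    refine (h3.sub (((h1.add h2).const_mul a1).div (h1.mul h2)
      (mul_ne_zero hxt hyt))).congr_deriv ?_
    -- Only the quotient rule is left; the explicit form of the polynomials plays no role.
    generalize P1 eta a0 a1 a2 a3 a1 (x t) (y t) (z t) = p1
    generalize P2 eta a0 a1 a2 a3 a1 (x t) (y t) (z t) = p2
    generalize P3 eta a0 a1 a2 a3 a1 (x t) (y t) (z t) = p3
    simp only [Pi.add_apply, Pi.mul_apply]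
    field_simp
    ring
end
end

section
/- The system (S) restricted by the parameter relations α4 = α3 = α1 admits the following Bäcklund transformation of affine Weyl group type G2^(1): if (x,y,z) is a solution of (S) with parameters (α0, α1, α2, α1, α1) (on an interval where x, y and y-1 do not vanish), then (x, y, z - α1·(y(y-1) + x(y-1) + xy)/(xy(y-1))) is a solution of (S) with parameters (α0, -α1, α2+3α1, -α1, -α1). -/
/-!
Since `(y(y-1) + x(y-1) + xy)/(xy(y-1)) = 1/x + 1/y + 1/(y-1)`, the transformation shifts `z` by
`-α₁(1/x + 1/y + 1/(y-1))`, i.e. it is the composite of three commuting `D₄⁽¹⁾` reflections, with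
equal parameters, at the three outer nodes `α₁, α₃, α₄`. As `x` and `y` are unchanged, the first two
equations amount to the invariance of `P1` and `P2` under the simultaneous change of `z` and of the
parameters (`P1_shift`, `P2_shift`). The third is the chain rule for the shifted `z` together with
the rational identity `P3_shift`, the only place where `α₀ + 3α₁ + 2α₂ = 1` enters.
-/

noncomputable section

/-- The shifted variable in partial fractions. -/
theorem shift_partialFractions {a1 x y z : ℂ} (hx : x ≠ 0) (hy : y ≠ 0) (hy1 : y - 1 ≠ 0) :
    z - a1*(y*(y-1) + x*(y-1) + x*y)/(x*y*(y-1)) = z - a1*(1/x + 1/y + 1/(y-1)) := by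
  field_simp

theorem P1_shift {eta a0 a1 a2 x y z : ℂ}
    (hx : x ≠ 0) (hy : y ≠ 0) (hy1 : y - 1 ≠ 0) :
    P1 eta a0 (-a1) (a2+3*a1) (-a1) (-a1) x y (z - a1*(1/x + 1/y + 1/(y-1))) =
      P1 eta a0 a1 a2 a1 a1 x y z := by
  unfold P1
  field_simp
  ring

theorem P2_shift {eta a0 a1 a2 x y z : ℂ}
    (hx : x ≠ 0) (hy : y ≠ 0) (hy1 : y - 1 ≠ 0) :
    P2 eta a0 (-a1) (a2+3*a1) (-a1) (-a1) x y (z - a1*(1/x + 1/y + 1/(y-1))) =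
      P2 eta a0 a1 a2 a1 a1 x y z := by
  unfold P2
  field_simp
  ring

/-- The derivative of the shifted `z` along the flow is the third component of the system with the
reflected parameters; the sign of the `P2` term comes from `y' = -(b/2η)·P2`. -/
theorem P3_shift {eta a0 a1 a2 x y z : ℂ} (hsum : a0 + a1 + 2*a2 + a1 + a1 = 1)
    (hx : x ≠ 0) (hy : y ≠ 0) (hy1 : y - 1 ≠ 0) :
    P3 eta a0 (-a1) (a2+3*a1) (-a1) (-a1) x y (z - a1*(1/x + 1/y + 1/(y-1))) =
      P3 eta a0 a1 a2 a1 a1 x y z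
        + a1*(P1 eta a0 a1 a2 a1 a1 x y z/x^2
          - P2 eta a0 a1 a2 a1 a1 x y z*(1/y^2 + 1/(y-1)^2)) := by
  obtain rfl : a0 = 1 - 3*a1 - 2*a2 := by linear_combination hsum
  unfold P1 P2 P3
  field_simp
  ring

/-- Bäcklund transformation `s₂` of affine Weyl group type `G₂⁽¹⁾`
for the system (S) restricted by `α₄ = α₃ = α₁`. -/
theorem statement7 (I : Set ℝ) (b : ℝ → ℂ) (eta a0 a1 a2 : ℂ)
    (heta : eta ≠ 0) (hb : ∀ t ∈ I, b t ≠ 0)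
    (hsum : a0 + a1 + 2*a2 + a1 + a1 = 1)
    (x y z : ℝ → ℂ) (hsol : IsSolD4 I b eta a0 a1 a2 a1 a1 x y z)
    (hx : ∀ t ∈ I, x t ≠ 0) (hy : ∀ t ∈ I, y t ≠ 0) (hy1 : ∀ t ∈ I, y t ≠ 1) :
    IsSolD4 I b eta a0 (-a1) (a2+3*a1) (-a1) (-a1)
      x y (fun t =>
        z t - a1*(y t*(y t - 1) + x t*(y t - 1) + x t*y t)/(x t*y t*(y t - 1))) := by
  intro t ht
  obtain ⟨h1, h2, h3⟩ := hsol t ht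
  have hx0 := hx t ht
  have hy0 := hy t ht
  have hy10 : y t - 1 ≠ 0 := sub_ne_zero.mpr (hy1 t ht)
  simp only [shift_partialFractions hx0 hy0 hy10, P1_shift hx0 hy0 hy10,
    P2_shift hx0 hy0 hy10, P3_shift hsum hx0 hy0 hy10]
  refine ⟨h1, h2, ?_⟩
  -- The partial fraction form agrees with the quotient only where the denominators are nonzero, so
  -- the quotient is differentiated as it stands, which needs no argument near `t`.
  have hy' := h2.sub_const 1
  have hnum := (((h2.mul hy').add (h1.mul hy')).add (h1.mul h2)).const_mul a1
  have hden := (h1.mul h2).mul hy'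
  refine (h3.sub (hnum.div hden (mul_ne_zero (mul_ne_zero hx0 hy0) hy10))).congr_deriv ?_
  simp only [Pi.mul_apply, Pi.add_apply]
  generalize P1 eta a0 a1 a2 a1 a1 (x t) (y t) (z t) = p1
  generalize P2 eta a0 a1 a2 a1 a1 (x t) (y t) (z t) = p2
  generalize P3 eta a0 a1 a2 a1 a1 (x t) (y t) (z t) = p3
  generalize b t / (2*eta) = c
  field_simp
  ring
end
end

section
/- Suppose (x,y,z) is a solution of the system (S) such that x(t) = y(t) for all t in the interval. Set X := y and Y := z. Then (X,Y) satisfies the Hamiltonian system dX/dt = ∂H/∂Y, dY/dt = -∂H/∂X, where H = H(X,Y,t) is the reduced Hamiltonian given in the context. -/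
/-!
On the locus `x = y` the equations of (S) for `y` and `z` are exactly Hamilton's equations for
`Hred`: once `a4` is eliminated by `a0 + a1 + 2*a2 + a3 + a4 = 1`, the restrictions of `-P2` and
`P3` to `x = y` agree, as polynomials, with `∂H/∂Y` and `-∂H/∂X` up to the common factor
`b t / (2*eta)`. The partial derivatives of `Hred` are computed in `hasDerivAt_Hred_snd` and
`hasDerivAt_Hred_fst`; the rest is a polynomial identity.
-/

noncomputable section

/-- The reduced polynomial Hamiltonian `H(X,Y,t)` (with `bt = b(t)`). -/
def Hred (eta a0 a1 a2 a3 a4 bt X Y : ℂ) : ℂ :=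
  -((eta-1)/(2*eta)) * bt *
    (-(X-1)*(X-eta)*X^2*Y^2
      - (2*a2*(X-1)*(X-eta) - a0*eta*(X-1) - a3*(X-eta))*X*Y
      - a2^2*X^2
      + a2*(1-(a0+a1+a2+a4) + (1-(a1+a2+a3+a4))*eta)*X)

/-- The partial derivative `∂H/∂Y` of the reduced Hamiltonian. -/
lemma hasDerivAt_Hred_snd (eta a0 a1 a2 a3 a4 bt X Y : ℂ) :
    HasDerivAt (fun w => Hred eta a0 a1 a2 a3 a4 bt X w)
      (-((eta-1)/(2*eta)) * bt *
        (-2*(X-1)*(X-eta)*X^2*Y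
          - (2*a2*(X-1)*(X-eta) - a0*eta*(X-1) - a3*(X-eta))*X)) Y := by
  unfold Hred
  have hY := hasDerivAt_id' Y
  have h := (((((hY.pow 2).const_mul (-(X-1)*(X-eta)*X^2)).sub
    (hY.const_mul ((2*a2*(X-1)*(X-eta) - a0*eta*(X-1) - a3*(X-eta))*X))).sub_const
    (a2^2*X^2)).add_const
    (a2*(1-(a0+a1+a2+a4) + (1-(a1+a2+a3+a4))*eta)*X)).const_mul (-((eta-1)/(2*eta)) * bt)
  refine h.congr_deriv ?_
  push_cast
  ring

/-- The partial derivative `∂H/∂X` of the reduced Hamiltonian. -/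
lemma hasDerivAt_Hred_fst (eta a0 a1 a2 a3 a4 bt X Y : ℂ) :
    HasDerivAt (fun w => Hred eta a0 a1 a2 a3 a4 bt w Y)
      (-((eta-1)/(2*eta)) * bt *
        (-(4*X^3 - 3*(1+eta)*X^2 + 2*eta*X)*Y^2
          - (2*a2*(3*X^2 - 2*(1+eta)*X + eta) - a0*eta*(2*X-1) - a3*(2*X-eta))*Y
          - 2*a2^2*X
          + a2*(1-(a0+a1+a2+a4) + (1-(a1+a2+a3+a4))*eta))) X := by
  have hX := hasDerivAt_id' X
  -- `Hred` expanded in powers of its first argument.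
  have h := (((((hX.pow 4).const_mul (-Y^2)).add
    ((hX.pow 3).const_mul ((1+eta)*Y^2 - 2*a2*Y))).add
    ((hX.pow 2).const_mul (-eta*Y^2 + (2*a2*(1+eta) + a0*eta + a3)*Y - a2^2))).add
    (hX.const_mul (-(2*a2*eta + a0*eta + a3*eta)*Y
      + a2*(1-(a0+a1+a2+a4) + (1-(a1+a2+a3+a4))*eta)))).const_mul (-((eta-1)/(2*eta)) * bt)
  refine (h.congr_of_eventuallyEq (.of_forall fun w => ?_)).congr_deriv ?_
  · simp only [Hred, Pi.add_apply, Pi.pow_apply]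
    ring
  · push_cast
    ring

/-- if `(x,y,z)` solves the system (S) with `x = y` on `I`, then
`X := y`, `Y := z` solve the Hamiltonian system `dX/dt = ∂H/∂Y`, `dY/dt = -∂H/∂X`
with the reduced Hamiltonian `H`. -/
theorem statement9 (I : Set ℝ) (b : ℝ → ℂ) (eta a0 a1 a2 a3 a4 : ℂ)
    (heta : eta ≠ 0) (hb : ∀ t ∈ I, b t ≠ 0)
    (hsum : a0 + a1 + 2*a2 + a3 + a4 = 1)
    (x y z : ℝ → ℂ) (hsol : IsSolD4 I b eta a0 a1 a2 a3 a4 x y z)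
    (hxy : ∀ t ∈ I, x t = y t) :
    ∀ t ∈ I,
      HasDerivAt y (deriv (fun w => Hred eta a0 a1 a2 a3 a4 (b t) (y t) w) (z t)) t ∧
      HasDerivAt z (-(deriv (fun w => Hred eta a0 a1 a2 a3 a4 (b t) w (z t)) (y t))) t := by
  intro t ht
  obtain ⟨-, hy, hz⟩ := hsol t ht
  rw [hxy t ht] at hy hz
  rw [(hasDerivAt_Hred_snd ..).deriv, (hasDerivAt_Hred_fst ..).deriv]
  obtain rfl : a4 = 1 - a0 - a1 - 2*a2 - a3 := by linear_combination hsum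
  refine ⟨hy.congr_deriv ?_, hz.congr_deriv ?_⟩
  · unfold P2
    field_simp
    ring
  · unfold P3
    field_simp
    ring
end
end

section
/- The reduced Hamiltonian system (R) admits the following Bäcklund transformations of affine Weyl group type D4^(1): if (X,Y) is a solution of (R) with parameters (α0,α1,α2,α3,α4) (on an interval where the indicated denominators do not vanish), then: (s0) (X, Y - α0/(X-η)) is a solution of (R) with parameters (-α0, α1, α2+α0, α3, α4); (s1) (X, Y - α1/X) is a solution with parameters (α0, -α1, α2+α1, α3, α4); (s2) (X + α2/Y, Y) is a solution with parameters (α0+α2, α1+α2, -α2, α3+α2, α4+α2); (s3) (X, Y - α3/(X-1)) is a solution with parameters (α0, α1, α2+α3, -α3, α4); (s4) (X, Y - α4/X) is a solution with parameters (α0, α1, α2+α4, α3, -α4). -/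
/-!
Put `Z = X Y + a2`. The relation `a0 + a1 + 2 a2 + a3 + a4 = 1` turns the Hamiltonian into
`c * (-(X-1)(X-η) Z² + (a0 η (X-1) + a3 (X-η)) Z)` plus a constant, where
`c = -((η-1)/(2η)) b(t)` (`Hred_eq`). Each `s_i` preserves that relation and is a canonical
transformation of `(X, Y)`, and it acts on `Z` by

* `s0`: `Z ↦ Z - a0 η / (X-η)`, `s3`: `Z ↦ Z - a3 / (X-1)`, completing the square in `Z`;
* `s1`, `s4`: `Z ↦ Z`;
* `s2`: `Z ↦ X Y`, with the new `X` equal to `Z / Y`.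

In every case the Hamiltonian changes only by a constant, so solutions go to solutions. The proof
checks this on the equations of motion, written out in `isSolR_iff`.
-/

noncomputable section

/-- `(X, Y)` is a solution of the reduced Hamiltonian system (R):
`dX/dt = ∂H/∂Y`, `dY/dt = -∂H/∂X`. -/
def IsSolR (I : Set ℝ) (b : ℝ → ℂ) (eta a0 a1 a2 a3 a4 : ℂ) (X Y : ℝ → ℂ) : Prop :=
  ∀ t ∈ I,
    HasDerivAt X (deriv (fun w => Hred eta a0 a1 a2 a3 a4 (b t) (X t) w) (Y t)) t ∧
    HasDerivAt Y (-(deriv (fun w => Hred eta a0 a1 a2 a3 a4 (b t) w (Y t)) (X t))) t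

/-- The Hamiltonian in terms of `Z = X Y + a2`; `a1` and `a4` enter only through the relation
between the parameters. -/
lemma Hred_eq (eta a0 a1 a2 a3 a4 bt X Y : ℂ) (hsum : a0 + a1 + 2*a2 + a3 + a4 = 1) :
    Hred eta a0 a1 a2 a3 a4 bt X Y = -((eta-1)/(2*eta)) * bt *
      (-((X-1)*(X-eta)*(X*Y+a2)^2) + (a0*eta*(X-1) + a3*(X-eta))*(X*Y+a2)
        + (a2^2*eta + a2*(a0+a3)*eta)) := by
  obtain rfl : a4 = 1 - (a0 + a1 + 2*a2 + a3) := by linear_combination hsum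
  unfold Hred
  ring

/-- `∂H/∂Y`, up to the factor `-((η-1)/(2η)) b(t)`. -/
def partialY (eta a0 a2 a3 X Y : ℂ) : ℂ :=
  -2*(X-1)*(X-eta)*(X*Y+a2)*X + (a0*eta*(X-1) + a3*(X-eta))*X

/-- `∂H/∂X`, up to the factor `-((η-1)/(2η)) b(t)`. -/
def partialX (eta a0 a2 a3 X Y : ℂ) : ℂ :=
  -(2*X-1-eta)*(X*Y+a2)^2 - 2*(X-1)*(X-eta)*(X*Y+a2)*Y
    + (a0*eta+a3)*(X*Y+a2) + (a0*eta*(X-1) + a3*(X-eta))*Y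

lemma deriv_Hred_Y (eta a0 a1 a2 a3 a4 bt X Y : ℂ) (hsum : a0 + a1 + 2*a2 + a3 + a4 = 1) :
    deriv (fun w => Hred eta a0 a1 a2 a3 a4 bt X w) Y
      = -((eta-1)/(2*eta)) * bt * partialY eta a0 a2 a3 X Y := by
  simp only [Hred_eq _ _ _ _ _ _ _ _ _ hsum]
  have hZ : HasDerivAt (fun w : ℂ => X*w+a2) X Y := by
    simpa using ((hasDerivAt_id Y).const_mul X).add_const a2
  refine (((((hZ.pow 2).const_mul ((X-1)*(X-eta))).neg.add
    (hZ.const_mul (a0*eta*(X-1) + a3*(X-eta)))).add_const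
      (a2^2*eta + a2*(a0+a3)*eta)).const_mul (-((eta-1)/(2*eta)) * bt)).deriv.trans ?_
  unfold partialY
  push_cast
  ring

lemma deriv_Hred_X (eta a0 a1 a2 a3 a4 bt X Y : ℂ) (hsum : a0 + a1 + 2*a2 + a3 + a4 = 1) :
    deriv (fun w => Hred eta a0 a1 a2 a3 a4 bt w Y) X
      = -((eta-1)/(2*eta)) * bt * partialX eta a0 a2 a3 X Y := by
  simp only [Hred_eq _ _ _ _ _ _ _ _ _ hsum]
  have hX (c : ℂ) : HasDerivAt (fun w : ℂ => w - c) 1 X := (hasDerivAt_id X).sub_const c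
  have hZ : HasDerivAt (fun w : ℂ => w*Y+a2) Y X := by
    simpa using ((hasDerivAt_id X).mul_const Y).add_const a2
  refine ((((((hX 1).mul (hX eta)).mul (hZ.pow 2)).neg.add
    ((((hX 1).const_mul (a0*eta)).add ((hX eta).const_mul a3)).mul hZ)).add_const
      (a2^2*eta + a2*(a0+a3)*eta)).const_mul (-((eta-1)/(2*eta)) * bt)).deriv.trans ?_
  simp only [partialX, Pi.mul_apply, Pi.pow_apply, Pi.add_apply]
  push_cast
  ring

lemma isSolR_iff (I : Set ℝ) (b : ℝ → ℂ) (eta a0 a1 a2 a3 a4 : ℂ) (X Y : ℝ → ℂ)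
    (hsum : a0 + a1 + 2*a2 + a3 + a4 = 1) :
    IsSolR I b eta a0 a1 a2 a3 a4 X Y ↔ ∀ t ∈ I,
      HasDerivAt X (-((eta-1)/(2*eta)) * b t * partialY eta a0 a2 a3 (X t) (Y t)) t ∧
      HasDerivAt Y (-(-((eta-1)/(2*eta)) * b t * partialX eta a0 a2 a3 (X t) (Y t))) t := by
  simp only [IsSolR, deriv_Hred_Y _ _ _ _ _ _ _ _ _ hsum, deriv_Hred_X _ _ _ _ _ _ _ _ _ hsum]

/-- The derivative of `g - a / (f - c)`, the shape of the new `Y` under `s0`, `s1`, `s3`, `s4`. -/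
lemma hasDerivAt_sub_div {f g : ℝ → ℂ} {f' g' : ℂ} {t : ℝ} (a c : ℂ) (hf : HasDerivAt f f' t)
    (hg : HasDerivAt g g' t) (h : f t - c ≠ 0) :
    HasDerivAt (fun s => g s - a / (f s - c)) (g' + a * f' / (f t - c)^2) t := by
  refine (hg.sub ((hasDerivAt_const t a).div (hf.sub_const c) h)).congr_deriv ?_
  ring

/-- Bäcklund transformations `s₀,…,s₄` of affine Weyl group type `D₄⁽¹⁾`
for the reduced Hamiltonian system (R). -/
theorem statement10 (I : Set ℝ) (b : ℝ → ℂ) (eta a0 a1 a2 a3 a4 : ℂ)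
    (heta : eta ≠ 0) (hb : ∀ t ∈ I, b t ≠ 0)
    (hsum : a0 + a1 + 2*a2 + a3 + a4 = 1)
    (X Y : ℝ → ℂ) (hsol : IsSolR I b eta a0 a1 a2 a3 a4 X Y) :
    ((∀ t ∈ I, X t ≠ eta) →
      IsSolR I b eta (-a0) a1 (a2+a0) a3 a4 X (fun t => Y t - a0/(X t - eta))) ∧
    ((∀ t ∈ I, X t ≠ 0) →
      IsSolR I b eta a0 (-a1) (a2+a1) a3 a4 X (fun t => Y t - a1/(X t))) ∧
    ((∀ t ∈ I, Y t ≠ 0) →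
      IsSolR I b eta (a0+a2) (a1+a2) (-a2) (a3+a2) (a4+a2)
        (fun t => X t + a2/(Y t)) Y) ∧
    ((∀ t ∈ I, X t ≠ 1) →
      IsSolR I b eta a0 a1 (a2+a3) (-a3) a4 X (fun t => Y t - a3/(X t - 1))) ∧
    ((∀ t ∈ I, X t ≠ 0) →
      IsSolR I b eta a0 a1 (a2+a4) a3 (-a4) X (fun t => Y t - a4/(X t))) := by
  rw [isSolR_iff _ _ _ _ _ _ _ _ _ _ hsum] at hsol
  refine ⟨?_, ?_, ?_, ?_, ?_⟩
  · intro hne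
    rw [isSolR_iff _ _ _ _ _ _ _ _ _ _ (by linear_combination hsum)]
    intro t ht
    obtain ⟨hX, hY⟩ := hsol t ht
    have hd : X t - eta ≠ 0 := sub_ne_zero.mpr (hne t ht)
    have hY' := hasDerivAt_sub_div a0 eta hX hY hd
    generalize -((eta-1)/(2*eta)) * b t = k at *
    refine ⟨hX.congr_deriv ?_, hY'.congr_deriv ?_⟩ <;>
    · simp only [partialX, partialY]
      field_simp
      ring
  · intro hne
    rw [isSolR_iff _ _ _ _ _ _ _ _ _ _ (by linear_combination hsum)]
    intro t ht
    obtain ⟨hX, hY⟩ := hsol t ht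
    have hd : X t - 0 ≠ 0 := sub_ne_zero.mpr (hne t ht)
    have hY' := hasDerivAt_sub_div a1 0 hX hY hd
    simp only [sub_zero] at hd hY'
    generalize -((eta-1)/(2*eta)) * b t = k at *
    refine ⟨hX.congr_deriv ?_, hY'.congr_deriv ?_⟩ <;>
    · simp only [partialX, partialY]
      field_simp
      ring
  · intro hne
    rw [isSolR_iff _ _ _ _ _ _ _ _ _ _ (by linear_combination hsum)]
    intro t ht
    obtain ⟨hX, hY⟩ := hsol t ht
    have hd : Y t ≠ 0 := hne t ht
    have hX' := hX.add ((hasDerivAt_const t a2).div hY hd)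
    generalize -((eta-1)/(2*eta)) * b t = k at *
    refine ⟨hX'.congr_deriv ?_, hY.congr_deriv ?_⟩ <;>
    · simp only [partialX, partialY]
      field_simp
      ring
  · intro hne
    rw [isSolR_iff _ _ _ _ _ _ _ _ _ _ (by linear_combination hsum)]
    intro t ht
    obtain ⟨hX, hY⟩ := hsol t ht
    have hd : X t - 1 ≠ 0 := sub_ne_zero.mpr (hne t ht)
    have hY' := hasDerivAt_sub_div a3 1 hX hY hd
    generalize -((eta-1)/(2*eta)) * b t = k at *
    refine ⟨hX.congr_deriv ?_, hY'.congr_deriv ?_⟩ <;>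
    · simp only [partialX, partialY]
      field_simp
      ring
  · intro hne
    rw [isSolR_iff _ _ _ _ _ _ _ _ _ _ (by linear_combination hsum)]
    intro t ht
    obtain ⟨hX, hY⟩ := hsol t ht
    have hd : X t - 0 ≠ 0 := sub_ne_zero.mpr (hne t ht)
    have hY' := hasDerivAt_sub_div a4 0 hX hY hd
    simp only [sub_zero] at hd hY'
    generalize -((eta-1)/(2*eta)) * b t = k at *
    refine ⟨hX.congr_deriv ?_, hY'.congr_deriv ?_⟩ <;>
    · simp only [partialX, partialY]
      field_simp
      ring
end
end

section
/- The symmetric Painlevé V system admits the following Bäcklund transformations of affine Weyl group type A3^(1): if (f0, f1, f2) is a solution with parameters (α0, α1, α2, α3) (on an interval where the indicated denominators do not vanish), then: (s0) (f0, f1 + α0/f0, f2) is a solution with parameters (-α0, α1+α0, α2, α3+α0); (s1) (f0 - α1/f1, f1, f2 - α1/f1) is a solution with parameters (α0+α1, -α1, α2+α1, α3); (s2) (f0, f1 + α2/f2, f2) is a solution with parameters (α0, α1+α2, -α2, α3+α2); (s3) (f0 - α3/(f1 - a), f1, f2 - α3/(f1 - a)) is a solution with parameters (α0+α3, α1, α2+α3,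 -α3); (π) (f2, f1, f0) is a solution with parameters (α2, α1, α0, α3). -/
/-!
Each transformed function is a rational expression in `f0, f1, f2`, so its derivative is given by
the quotient rule and the original system. Substituting, each of the three equations with the new
parameters becomes an identity of rational functions in `f0, f1, f2, a, φ, α0, …, α3` whose only
denominator is `f0`, `f1`, `f2` or `f1 - a`. The transformation
`s2` is the conjugate of `s0` by the reflection `π` (`IsSolPV.reflect`), which exchanges the first
and third equations.
-/

noncomputable section

/-- `(f0, f1, f2)` is a solution of the symmetric Painlevé V system on `I`,
with parameters `a`, `φ` and `α0, α1, α2, α3`. -/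
def IsSolPV (I : Set ℝ) (a phi a0 a1 a2 a3 : ℂ) (f0 f1 f2 : ℝ → ℂ) : Prop :=
  ∀ t ∈ I,
    HasDerivAt f0 (-(phi/2)*(-2*f0 t*f1 t*f2 t + a*f0 t*f2 t
      + (a0+a1+a3)*f0 t - a0*f2 t)) t ∧
    HasDerivAt f1 ((phi/2)*(-f0 t*(f1 t)^2 - (f1 t)^2*f2 t + a*f0 t*f1 t
      + a*f1 t*f2 t - a*a1 + (a1+a3)*f1 t)) t ∧
    HasDerivAt f2 (-(phi/2)*(-2*f0 t*f1 t*f2 t + a*f0 t*f2 t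
      + (a1+a2+a3)*f2 t - a2*f0 t)) t

theorem HasDerivAt.const_div_fun {g : ℝ → ℂ} {g' : ℂ} {t : ℝ} (c : ℂ)
    (hg : HasDerivAt g g' t) (h : g t ≠ 0) :
    HasDerivAt (fun s => c / g s) (-(c * g') / g t ^ 2) t := by
  simpa using (hasDerivAt_const t c).fun_div hg h

section Backlund

variable {I : Set ℝ} {a phi a0 a1 a2 a3 : ℂ} {f0 f1 f2 : ℝ → ℂ}

theorem IsSolPV.reflect (hsol : IsSolPV I a phi a0 a1 a2 a3 f0 f1 f2) :
    IsSolPV I a phi a2 a1 a0 a3 f2 f1 f0 := by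
  intro t ht
  obtain ⟨h0, h1, h2⟩ := hsol t ht
  refine ⟨h2.congr_deriv ?_, h1.congr_deriv ?_, h0.congr_deriv ?_⟩ <;> ring

theorem IsSolPV.s0 (hsol : IsSolPV I a phi a0 a1 a2 a3 f0 f1 f2) (hne : ∀ t ∈ I, f0 t ≠ 0) :
    IsSolPV I a phi (-a0) (a1+a0) a2 (a3+a0) f0 (fun t => f1 t + a0/f0 t) f2 := by
  intro t ht
  obtain ⟨h0, h1, h2⟩ := hsol t ht
  have hn := hne t ht
  refine ⟨h0.congr_deriv ?_, (h1.fun_add (h0.const_div_fun a0 hn)).congr_deriv ?_,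
    h2.congr_deriv ?_⟩ <;> field_simp <;> ring

theorem IsSolPV.s1 (hsol : IsSolPV I a phi a0 a1 a2 a3 f0 f1 f2) (hne : ∀ t ∈ I, f1 t ≠ 0) :
    IsSolPV I a phi (a0+a1) (-a1) (a2+a1) a3
      (fun t => f0 t - a1/f1 t) f1 (fun t => f2 t - a1/f1 t) := by
  intro t ht
  obtain ⟨h0, h1, h2⟩ := hsol t ht
  have hn := hne t ht
  have hd := h1.const_div_fun a1 hn
  refine ⟨(h0.fun_sub hd).congr_deriv ?_, h1.congr_deriv ?_,
    (h2.fun_sub hd).congr_deriv ?_⟩ <;> field_simp <;> ring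

theorem IsSolPV.s3 (hsol : IsSolPV I a phi a0 a1 a2 a3 f0 f1 f2) (hne : ∀ t ∈ I, f1 t ≠ a) :
    IsSolPV I a phi (a0+a3) a1 (a2+a3) (-a3)
      (fun t => f0 t - a3/(f1 t - a)) f1 (fun t => f2 t - a3/(f1 t - a)) := by
  intro t ht
  obtain ⟨h0, h1, h2⟩ := hsol t ht
  have hn : f1 t - a ≠ 0 := sub_ne_zero.mpr (hne t ht)
  have hd := (h1.sub_const a).const_div_fun a3 hn
  refine ⟨(h0.fun_sub hd).congr_deriv ?_, h1.congr_deriv ?_,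
    (h2.fun_sub hd).congr_deriv ?_⟩ <;> field_simp <;> ring

end Backlund

/-- Bäcklund transformations `s₀, s₁, s₂, s₃, π` of affine Weyl group
type `A₃⁽¹⁾` for the symmetric Painlevé V system. -/
theorem statement14 (I : Set ℝ) (a phi a0 a1 a2 a3 : ℂ) (hphi : phi ≠ 0)
    (hsum : a0 + a1 + a2 + a3 = 1)
    (f0 f1 f2 : ℝ → ℂ) (hsol : IsSolPV I a phi a0 a1 a2 a3 f0 f1 f2) :
    ((∀ t ∈ I, f0 t ≠ 0) →
      IsSolPV I a phi (-a0) (a1+a0) a2 (a3+a0)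
        f0 (fun t => f1 t + a0/f0 t) f2) ∧
    ((∀ t ∈ I, f1 t ≠ 0) →
      IsSolPV I a phi (a0+a1) (-a1) (a2+a1) a3
        (fun t => f0 t - a1/f1 t) f1 (fun t => f2 t - a1/f1 t)) ∧
    ((∀ t ∈ I, f2 t ≠ 0) →
      IsSolPV I a phi a0 (a1+a2) (-a2) (a3+a2)
        f0 (fun t => f1 t + a2/f2 t) f2) ∧
    ((∀ t ∈ I, f1 t ≠ a) →
      IsSolPV I a phi (a0+a3) a1 (a2+a3) (-a3)
        (fun t => f0 t - a3/(f1 t - a)) f1 (fun t => f2 t - a3/(f1 t - a))) ∧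
    IsSolPV I a phi a2 a1 a0 a3 f2 f1 f0 := by
  exact ⟨hsol.s0, hsol.s1, fun hne => (hsol.reflect.s0 hne).reflect, hsol.s3, hsol.reflect⟩
end
end

section
/- Let (f0, f1, f2) be a solution of the symmetric Painlevé III system with α0+2α1+α2 = 1 such that f1 never vanishes, and suppose f0(t) - f2(t) = e^(t+c) for a constant c. Set T := e^(t+c), x := 1/f1, y := -(f1f2 + α2)f1. Then dx/dt = T·(2x²y/T - η·x²/T + 2(α1+α2)x/T - 1) and dy/dt = T·(-2xy²/T + 2η·xy/T - 2(α1+α2)y/T + η·α2/T); that is, in the variable T the pair (x,y) satisfies the Painlevé III Hamiltonian system dx/dT = ∂H_III/∂y, dy/dT = -∂H_III/∂x with H_III = (x²y² - η·x²y + 2(α1+α2)xy - Ty - η·α2·x)/T. -/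
noncomputable section

/-- `(f0, f1, f2)` is a solution of the symmetric Painlevé III system on `I`,
with constant `η` and parameters `α0, α1, α2`. -/
def IsSolPIII (I : Set ℝ) (eta a0 a1 a2 : ℂ) (f0 f1 f2 : ℝ → ℂ) : Prop :=
  ∀ t ∈ I,
    HasDerivAt f0 (-2*f0 t*f1 t*f2 t + (a0+2*a1)*f0 t - a0*f2 t) t ∧
    HasDerivAt f1 ((f0 t + f2 t)*(f1 t)^2 - 2*a1*f1 t + eta) t ∧
    HasDerivAt f2 (-2*f0 t*f1 t*f2 t + (2*a1+a2)*f2 t - a2*f0 t) t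

/-- if `(f0,f1,f2)` solves the symmetric Painlevé III system with `f1 ≠ 0`
and `f0 - f2 = e^(t+c)`, then with `T := e^(t+c)`, `x := 1/f1`, `y := -(f1 f2 + α2) f1`
the pair `(x,y)` satisfies the Painlevé III Hamiltonian system in the variable `T`, i.e.
`dx/dt = T·(∂H_III/∂y)` and `dy/dt = T·(-∂H_III/∂x)`. -/
theorem statement16 (I : Set ℝ) (eta a0 a1 a2 c : ℂ) (heta : eta ≠ 0)
    (hsum : a0 + 2*a1 + a2 = 1)
    (f0 f1 f2 : ℝ → ℂ) (hsol : IsSolPIII I eta a0 a1 a2 f0 f1 f2)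
    (hf1 : ∀ t ∈ I, f1 t ≠ 0)
    (hexp : ∀ t ∈ I, f0 t - f2 t = Complex.exp (t + c)) :
    ∀ t ∈ I,
      HasDerivAt (fun s => 1/(f1 s))
        (Complex.exp (t + c) *
          (2*(1/(f1 t))^2*(-(f1 t*f2 t + a2)*f1 t)/Complex.exp (t + c)
            - eta*(1/(f1 t))^2/Complex.exp (t + c)
            + 2*(a1+a2)*(1/(f1 t))/Complex.exp (t + c) - 1)) t ∧
      HasDerivAt (fun s => -(f1 s*f2 s + a2)*f1 s)
        (Complex.exp (t + c) *
          (-2*(1/(f1 t))*(-(f1 t*f2 t + a2)*f1 t)^2/Complex.exp (t + c)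
            + 2*eta*(1/(f1 t))*(-(f1 t*f2 t + a2)*f1 t)/Complex.exp (t + c)
            - 2*(a1+a2)*(-(f1 t*f2 t + a2)*f1 t)/Complex.exp (t + c)
            + eta*a2/Complex.exp (t + c))) t := by
  intro t ht
  obtain ⟨-, h1, h2⟩ := hsol t ht
  have hne := hf1 t ht
  have hT := hexp t ht
  have hE : Complex.exp (t + c) ≠ 0 := Complex.exp_ne_zero _
  -- The factors `T` cancel; what remains of `T` is the term `-T` in `dx/dt`, which
  -- `T = f0 - f2` turns into the combination `-(f0 + f2)` coming from `-f1' / f1 ^ 2`.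
  generalize Complex.exp (t + c) = T at hT hE ⊢
  constructor
  · simp only [one_div]
    refine (h1.fun_inv hne).congr_deriv ?_
    field_simp
    rw [← hT]
    ring
  · refine ((((h1.fun_mul h2).add_const a2).fun_neg).fun_mul h1).congr_deriv ?_
    field_simp
    ring
end
end

section
/- Regard s0, s1, s2, π as birational maps of the space with coordinates (f0, f1, f2; η, α0, α1, α2), defined by: s0(f0,f1,f2;η,α0,α1,α2) = (f0, f1+α0/f0, f2; η, -α0, α1+α0, α2); s1(f0,f1,f2;η,α0,α1,α2) = (f0 - 2α1/f1 + η/f1², f1, f2 - 2α1/f1 + η/f1²; -η, α0+2α1, -α1, α2+2α1); s2(f0,f1,f2;η,α0,α1,α2) = (f0, f1+α2/f2, f2; η, α0, α1+α2, -α2); π(f0,f1,f2;η,α0,α1,α2) = (f2, f1, f0; η, α2, α1, α0). Then, at every point where all intermediate expressions are defined (all denominators nonzero), these maps satisfy the relations s0² = s1² = s2² = π² = id, (s0∘s2)² = id, (s0∘s1)⁴ = id, (s1∘s2)⁴ = id, and π∘s0 = s2∘π, π∘s1 = s1∘π, π∘s2 = s0∘π. -/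
/-!
The relations of order two and those involving `π` are immediate. For `(s₀s₁)⁴ = 1`, the
difference `f2 - f0 = d` is preserved by `s₀` and `s₁`, and the orbit of a point under
alternating `s₀` and `s₁` is an octagon whose eight vertices have explicit factorised
coordinates in terms of `f = f0`, `g = f1` and the four polynomials `h`, `N`, `M`, `K`
(`hPoly`, `NPoly`, `MPoly`, `KPoly`). As `s₀` and `s₁` are involutions, each edge of the
octagon can be traversed both ways. Going round one way proves `(s₀s₁)⁴ = 1`; going round
the other way proves `(s₁s₀)⁴ = 1`, which is conjugate under `π` to `(s₁s₂)⁴ = 1`. Along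
either path, the assumed nonvanishing of the successive denominators gives exactly the
nonvanishing of the polynomials needed for the next edge.
-/

noncomputable section

/-- A point `(f0, f1, f2; η, α0, α1, α2)` of the space on which the Bäcklund
transformations of type `C₂⁽¹⁾` of the symmetric Painlevé III system act. -/
structure Pt where
  f0 : ℂ
  f1 : ℂ
  f2 : ℂ
  eta : ℂ
  a0 : ℂ
  a1 : ℂ
  a2 : ℂ

/-- The Bäcklund transformation `s₀`. -/
def s0 (p : Pt) : Pt :=
  ⟨p.f0, p.f1 + p.a0/p.f0, p.f2, p.eta, -p.a0, p.a1 + p.a0, p.a2⟩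

/-- The Bäcklund transformation `s₁`. -/
def s1 (p : Pt) : Pt :=
  ⟨p.f0 - 2*p.a1/p.f1 + p.eta/p.f1^2, p.f1, p.f2 - 2*p.a1/p.f1 + p.eta/p.f1^2,
    -p.eta, p.a0 + 2*p.a1, -p.a1, p.a2 + 2*p.a1⟩

/-- The Bäcklund transformation `s₂`. -/
def s2 (p : Pt) : Pt :=
  ⟨p.f0, p.f1 + p.a2/p.f2, p.f2, p.eta, p.a0, p.a1 + p.a2, -p.a2⟩

/-- The Bäcklund transformation (diagram rotation) `π`. -/
def pr (p : Pt) : Pt :=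
  ⟨p.f2, p.f1, p.f0, p.eta, p.a2, p.a1, p.a0⟩

/-- The value `f0 * f1 + a0` of the product of the first two coordinates after `s₀`. -/
def hPoly (f g a : ℂ) : ℂ := f*g + a

/-- The numerator `f0 * f1² - 2 * a1 * f1 + η` of the first coordinate after `s₁`. -/
def NPoly (f g e b : ℂ) : ℂ := f*g^2 - 2*b*g + e

/-- The factor `f0 * f1² + a0 * f1 + η` that appears in the second coordinate after `s₀ s₁`. -/
def MPoly (f g e a : ℂ) : ℂ := f*g^2 + a*g + e

/-- The factor that appears in the first coordinate after `s₁ s₀`. -/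
def KPoly (f g e a b : ℂ) : ℂ := (f*g + a)*(f*g - a - 2*b) + e*f

/-- The base vertex of the octagon, with `f2` written as `f + d`. -/
def vert0 (f g d e a b c : ℂ) : Pt := ⟨f, g, f + d, e, a, b, c⟩

/-- The vertex `s₁ p` of the octagon through the base vertex `p`. -/
def vert1 (f g d e a b c : ℂ) : Pt :=
  ⟨(NPoly f g e b)/g^2, g, (NPoly f g e b)/g^2 + d,
    -e, a + 2*b, -b, c + 2*b⟩

/-- The vertex `s₀ s₁ p` of the octagon through the base vertex `p`. -/
def vert2 (f g d e a b c : ℂ) : Pt :=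
  ⟨(NPoly f g e b)/g^2, g*(MPoly f g e a)/(NPoly f g e b), (NPoly f g e b)/g^2 + d,
    -e, -a - 2*b, a + b, c + 2*b⟩

/-- The vertex `s₁ s₀ s₁ p` of the octagon through the base vertex `p`. -/
def vert3 (f g d e a b c : ℂ) : Pt :=
  ⟨(NPoly f g e b)*(KPoly f g e a b)/(MPoly f g e a)^2, g*(MPoly f g e a)/(NPoly f g e b), (NPoly f g e b)*(KPoly f g e a b)/(MPoly f g e a)^2 + d,
    e, a, -a - b, c + 2*a + 4*b⟩

/-- The vertex `s₀ s₁ s₀ s₁ p = s₁ s₀ s₁ s₀ p` of the octagon through the base vertex `p`. -/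
def vert4 (f g d e a b c : ℂ) : Pt :=
  ⟨(NPoly f g e b)*(KPoly f g e a b)/(MPoly f g e a)^2, (MPoly f g e a)*(hPoly f g a)/(KPoly f g e a b), (NPoly f g e b)*(KPoly f g e a b)/(MPoly f g e a)^2 + d,
    e, -a, -b, c + 2*a + 4*b⟩

/-- The vertex `s₀ s₁ s₀ p` of the octagon through the base vertex `p`. -/
def vert5 (f g d e a b c : ℂ) : Pt :=
  ⟨f*(KPoly f g e a b)/(hPoly f g a)^2, (MPoly f g e a)*(hPoly f g a)/(KPoly f g e a b), f*(KPoly f g e a b)/(hPoly f g a)^2 + d,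
    -e, -a - 2*b, b, c + 2*a + 2*b⟩

/-- The vertex `s₁ s₀ p` of the octagon through the base vertex `p`. -/
def vert6 (f g d e a b c : ℂ) : Pt :=
  ⟨f*(KPoly f g e a b)/(hPoly f g a)^2, (hPoly f g a)/f, f*(KPoly f g e a b)/(hPoly f g a)^2 + d,
    -e, a + 2*b, -a - b, c + 2*a + 2*b⟩

/-- The vertex `s₀ p` of the octagon through the base vertex `p`. -/
def vert7 (f g d e a b c : ℂ) : Pt :=
  ⟨f, (hPoly f g a)/f, f + d,
    e, -a, a + b, c⟩

/-- Holds without a nonvanishing hypothesis: if `f0 = 0`, the quotients are `0` by convention. The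
same applies to `s₁` and `s₂` below. -/
theorem s0_s0 (p : Pt) : s0 (s0 p) = p := by
  obtain ⟨f, g, k, e, a, b, c⟩ := p
  simp only [s0]
  rw [Pt.mk.injEq]
  refine ⟨?_, ?_, ?_, ?_, ?_, ?_, ?_⟩ <;> ring

theorem s1_s1 (p : Pt) : s1 (s1 p) = p := by
  obtain ⟨f, g, k, e, a, b, c⟩ := p
  simp only [s1]
  rw [Pt.mk.injEq]
  refine ⟨?_, ?_, ?_, ?_, ?_, ?_, ?_⟩ <;> ring

theorem s2_s2 (p : Pt) : s2 (s2 p) = p := by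
  obtain ⟨f, g, k, e, a, b, c⟩ := p
  simp only [s2]
  rw [Pt.mk.injEq]
  refine ⟨?_, ?_, ?_, ?_, ?_, ?_, ?_⟩ <;> ring

theorem pr_s0 (p : Pt) : pr (s0 p) = s2 (pr p) := rfl

theorem pr_s1 (p : Pt) : pr (s1 p) = s1 (pr p) := rfl

/-- Division-free criterion for computing `s₀`. -/
theorem s0_mk {f g g' k e a b c a' b' : ℂ} (hf : f ≠ 0) (hg : f*g' = f*g + a)
    (ha : a' = -a) (hb : b' = b + a) :
    s0 ⟨f, g, k, e, a, b, c⟩ = ⟨f, g', k, e, a', b', c⟩ := by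
  have hg' : g + a/f = g' := by
    field_simp
    linear_combination -hg
  simp only [s0, hg', ha, hb]

/-- Division-free criterion for computing `s₁`. -/
theorem s1_mk {f f' g d e a b c e' a' b' c' : ℂ} (hg : g ≠ 0)
    (hf : g^2*f' = g^2*f - 2*b*g + e) (he : e' = -e) (ha : a' = a + 2*b) (hb : b' = -b)
    (hc : c' = c + 2*b) :
    s1 ⟨f, g, f + d, e, a, b, c⟩ = ⟨f', g, f' + d, e', a', b', c'⟩ := by
  have hf' : f - 2*b/g + e/g^2 = f' := by
    field_simp
    linear_combination -hf
  have hd : f + d - 2*b/g + e/g^2 = f' + d := by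
    rw [← hf']
    ring
  simp only [s1, hf', hd, he, ha, hb, hc]

theorem edge01 (f g d e a b c : ℂ)
    (hg : g ≠ 0) :
    s1 (vert0 f g d e a b c) = vert1 f g d e a b c := by
  unfold vert0 vert1
  refine s1_mk ?_ ?_ ?_ ?_ ?_ ?_
  · simp [*]
  · field_simp
    simp only [hPoly, NPoly, MPoly, KPoly]
    ring
  all_goals ring

theorem edge12 (f g d e a b c : ℂ)
    (hg : g ≠ 0) (hN : NPoly f g e b ≠ 0) :
    s0 (vert1 f g d e a b c) = vert2 f g d e a b c := by
  unfold vert1 vert2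
  refine s0_mk ?_ ?_ ?_ ?_
  · simp [*]
  · field_simp
    simp only [hPoly, NPoly, MPoly, KPoly]
    ring
  all_goals ring

theorem edge23 (f g d e a b c : ℂ)
    (hg : g ≠ 0) (hN : NPoly f g e b ≠ 0) (hM : MPoly f g e a ≠ 0) :
    s1 (vert2 f g d e a b c) = vert3 f g d e a b c := by
  unfold vert2 vert3
  refine s1_mk ?_ ?_ ?_ ?_ ?_ ?_
  · simp [*]
  · field_simp
    simp only [hPoly, NPoly, MPoly, KPoly]
    ring
  all_goals ring

theorem edge34 (f g d e a b c : ℂ)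
    (hN : NPoly f g e b ≠ 0) (hM : MPoly f g e a ≠ 0) (hK : KPoly f g e a b ≠ 0) :
    s0 (vert3 f g d e a b c) = vert4 f g d e a b c := by
  unfold vert3 vert4
  refine s0_mk ?_ ?_ ?_ ?_
  · simp [*]
  · field_simp
    simp only [hPoly, NPoly, MPoly, KPoly]
    ring
  all_goals ring

theorem edge45 (f g d e a b c : ℂ)
    (hM : MPoly f g e a ≠ 0) (hK : KPoly f g e a b ≠ 0) (hh : hPoly f g a ≠ 0) :
    s1 (vert4 f g d e a b c) = vert5 f g d e a b c := by
  unfold vert4 vert5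
  refine s1_mk ?_ ?_ ?_ ?_ ?_ ?_
  · simp [*]
  · field_simp
    simp only [hPoly, NPoly, MPoly, KPoly]
    ring
  all_goals ring

theorem edge56 (f g d e a b c : ℂ)
    (hK : KPoly f g e a b ≠ 0) (hh : hPoly f g a ≠ 0) (hf : f ≠ 0) :
    s0 (vert5 f g d e a b c) = vert6 f g d e a b c := by
  unfold vert5 vert6
  refine s0_mk ?_ ?_ ?_ ?_
  · simp [*]
  · field_simp
    simp only [hPoly, NPoly, MPoly, KPoly]
    ring
  all_goals ring

theorem edge67 (f g d e a b c : ℂ)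
    (hh : hPoly f g a ≠ 0) (hf : f ≠ 0) :
    s1 (vert6 f g d e a b c) = vert7 f g d e a b c := by
  unfold vert6 vert7
  refine s1_mk ?_ ?_ ?_ ?_ ?_ ?_
  · simp [*]
  · field_simp
    simp only [hPoly, NPoly, MPoly, KPoly]
    ring
  all_goals ring

theorem edge70 (f g d e a b c : ℂ)
    (hf : f ≠ 0) :
    s0 (vert7 f g d e a b c) = vert0 f g d e a b c := by
  unfold vert7 vert0
  refine s0_mk ?_ ?_ ?_ ?_
  · simp [*]
  · field_simp
    simp only [hPoly, NPoly, MPoly, KPoly]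
    ring
  all_goals ring

/-- One full turn round the octagon, starting with `s₁`. -/
theorem octagon (f g d e a b c : ℂ)
    (h0 : (vert0 f g d e a b c).f1 ≠ 0)
    (h1 : (s1 (vert0 f g d e a b c)).f0 ≠ 0)
    (h2 : (s0 (s1 (vert0 f g d e a b c))).f1 ≠ 0)
    (h3 : (s1 (s0 (s1 (vert0 f g d e a b c)))).f0 ≠ 0)
    (h4 : (s0 (s1 (s0 (s1 (vert0 f g d e a b c))))).f1 ≠ 0)
    (h5 : (s1 (s0 (s1 (s0 (s1 (vert0 f g d e a b c)))))).f0 ≠ 0)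
    (h6 : (s0 (s1 (s0 (s1 (s0 (s1 (vert0 f g d e a b c))))))).f1 ≠ 0)
    (h7 : (s1 (s0 (s1 (s0 (s1 (s0 (s1 (vert0 f g d e a b c)))))))).f0 ≠ 0) :
    s0 (s1 (s0 (s1 (s0 (s1 (s0 (s1 (vert0 f g d e a b c)))))))) = vert0 f g d e a b c := by
  have hg : g ≠ 0 := by
    rintro rfl
    simp [vert0] at h0
  have e0 := edge01 f g d e a b c hg
  rw [e0] at h1
  have hN : NPoly f g e b ≠ 0 := by
    rintro h
    simp [vert1, h] at h1
  have e1 := edge12 f g d e a b c hg hN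
  rw [e0, e1] at h2
  have hM : MPoly f g e a ≠ 0 := by
    rintro h
    simp [vert2, h] at h2
  have e2 := edge23 f g d e a b c hg hN hM
  rw [e0, e1, e2] at h3
  have hK : KPoly f g e a b ≠ 0 := by
    rintro h
    simp [vert3, h] at h3
  have e3 := edge34 f g d e a b c hN hM hK
  rw [e0, e1, e2, e3] at h4
  have hh : hPoly f g a ≠ 0 := by
    rintro h
    simp [vert4, h] at h4
  have e4 := edge45 f g d e a b c hM hK hh
  rw [e0, e1, e2, e3, e4] at h5
  have hf : f ≠ 0 := by
    rintro rfl
    simp [vert5] at h5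
  have e5 := edge56 f g d e a b c hK hh hf
  rw [e0, e1, e2, e3, e4, e5] at h6
  have e6 := edge67 f g d e a b c hh hf
  rw [e0, e1, e2, e3, e4, e5, e6] at h7
  have e7 := edge70 f g d e a b c hf
  rw [e0, e1, e2, e3, e4, e5, e6, e7]

/-- One full turn round the octagon in the opposite direction, starting with `s₀`. -/
theorem octagon_reverse (f g d e a b c : ℂ)
    (h0 : (vert0 f g d e a b c).f0 ≠ 0)
    (h1 : (s0 (vert0 f g d e a b c)).f1 ≠ 0)
    (h2 : (s1 (s0 (vert0 f g d e a b c))).f0 ≠ 0)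
    (h3 : (s0 (s1 (s0 (vert0 f g d e a b c)))).f1 ≠ 0)
    (h4 : (s1 (s0 (s1 (s0 (vert0 f g d e a b c))))).f0 ≠ 0)
    (h5 : (s0 (s1 (s0 (s1 (s0 (vert0 f g d e a b c)))))).f1 ≠ 0)
    (h6 : (s1 (s0 (s1 (s0 (s1 (s0 (vert0 f g d e a b c))))))).f0 ≠ 0)
    (h7 : (s0 (s1 (s0 (s1 (s0 (s1 (s0 (vert0 f g d e a b c)))))))).f1 ≠ 0) :
    s1 (s0 (s1 (s0 (s1 (s0 (s1 (s0 (vert0 f g d e a b c)))))))) = vert0 f g d e a b c := by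
  have hf : f ≠ 0 := by
    rintro rfl
    simp [vert0] at h0
  have e0 : s0 (vert0 f g d e a b c) = vert7 f g d e a b c := by
    rw [← edge70 f g d e a b c hf, s0_s0]
  rw [e0] at h1
  have hh : hPoly f g a ≠ 0 := by
    rintro h
    simp [vert7, h] at h1
  have e1 : s1 (vert7 f g d e a b c) = vert6 f g d e a b c := by
    rw [← edge67 f g d e a b c hh hf, s1_s1]
  rw [e0, e1] at h2
  have hK : KPoly f g e a b ≠ 0 := by
    rintro h
    simp [vert6, h] at h2
  have e2 : s0 (vert6 f g d e a b c) = vert5 f g d e a b c := by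
    rw [← edge56 f g d e a b c hK hh hf, s0_s0]
  rw [e0, e1, e2] at h3
  have hM : MPoly f g e a ≠ 0 := by
    rintro h
    simp [vert5, h] at h3
  have e3 : s1 (vert5 f g d e a b c) = vert4 f g d e a b c := by
    rw [← edge45 f g d e a b c hM hK hh, s1_s1]
  rw [e0, e1, e2, e3] at h4
  have hN : NPoly f g e b ≠ 0 := by
    rintro h
    simp [vert4, h] at h4
  have e4 : s0 (vert4 f g d e a b c) = vert3 f g d e a b c := by
    rw [← edge34 f g d e a b c hN hM hK, s0_s0]
  rw [e0, e1, e2, e3, e4] at h5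
  have hg : g ≠ 0 := by
    rintro rfl
    simp [vert3] at h5
  have e5 : s1 (vert3 f g d e a b c) = vert2 f g d e a b c := by
    rw [← edge23 f g d e a b c hg hN hM, s1_s1]
  rw [e0, e1, e2, e3, e4, e5] at h6
  have e6 : s0 (vert2 f g d e a b c) = vert1 f g d e a b c := by
    rw [← edge12 f g d e a b c hg hN, s0_s0]
  rw [e0, e1, e2, e3, e4, e5, e6] at h7
  have e7 : s1 (vert1 f g d e a b c) = vert0 f g d e a b c := by
    rw [← edge01 f g d e a b c hg, s1_s1]
  rw [e0, e1, e2, e3, e4, e5, e6, e7]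

theorem eq_vert0 (p : Pt) : p = vert0 p.f0 p.f1 (p.f2 - p.f0) p.eta p.a0 p.a1 p.a2 := by
  simp [vert0]

/-- the Bäcklund transformations `s₀, s₁, s₂, π` of the symmetric
Painlevé III system satisfy the relations of the extended affine Weyl group of type
`C₂⁽¹⁾`: `s₀² = s₁² = s₂² = π² = (s₀s₂)² = (s₀s₁)⁴ = (s₁s₂)⁴ = 1` and
`π s₀ = s₂ π`, `π s₁ = s₁ π`, `π s₂ = s₀ π`, at every point where all intermediate
denominators are nonzero. -/
theorem statement18 :
    (∀ p : Pt, p.f0 ≠ 0 → (s0 p).f0 ≠ 0 → s0 (s0 p) = p) ∧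
    (∀ p : Pt, p.f1 ≠ 0 → (s1 p).f1 ≠ 0 → s1 (s1 p) = p) ∧
    (∀ p : Pt, p.f2 ≠ 0 → (s2 p).f2 ≠ 0 → s2 (s2 p) = p) ∧
    (∀ p : Pt, pr (pr p) = p) ∧
    (∀ p : Pt, p.f2 ≠ 0 → (s2 p).f0 ≠ 0 → (s0 (s2 p)).f2 ≠ 0 →
      (s2 (s0 (s2 p))).f0 ≠ 0 → s0 (s2 (s0 (s2 p))) = p) ∧
    (∀ p : Pt,
      p.f1 ≠ 0 → (s1 p).f0 ≠ 0 →
      (s0 (s1 p)).f1 ≠ 0 → (s1 (s0 (s1 p))).f0 ≠ 0 →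
      (s0 (s1 (s0 (s1 p)))).f1 ≠ 0 → (s1 (s0 (s1 (s0 (s1 p))))).f0 ≠ 0 →
      (s0 (s1 (s0 (s1 (s0 (s1 p)))))).f1 ≠ 0 →
      (s1 (s0 (s1 (s0 (s1 (s0 (s1 p))))))).f0 ≠ 0 →
      s0 (s1 (s0 (s1 (s0 (s1 (s0 (s1 p))))))) = p) ∧
    (∀ p : Pt,
      p.f2 ≠ 0 → (s2 p).f1 ≠ 0 →
      (s1 (s2 p)).f2 ≠ 0 → (s2 (s1 (s2 p))).f1 ≠ 0 →
      (s1 (s2 (s1 (s2 p)))).f2 ≠ 0 → (s2 (s1 (s2 (s1 (s2 p))))).f1 ≠ 0 →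
      (s1 (s2 (s1 (s2 (s1 (s2 p)))))).f2 ≠ 0 →
      (s2 (s1 (s2 (s1 (s2 (s1 (s2 p))))))).f1 ≠ 0 →
      s1 (s2 (s1 (s2 (s1 (s2 (s1 (s2 p))))))) = p) ∧
    (∀ p : Pt, p.f0 ≠ 0 → pr (s0 p) = s2 (pr p)) ∧
    (∀ p : Pt, p.f1 ≠ 0 → pr (s1 p) = s1 (pr p)) ∧
    (∀ p : Pt, p.f2 ≠ 0 → pr (s2 p) = s0 (pr p)) := by
  refine ⟨fun p _ _ => s0_s0 p, fun p _ _ => s1_s1 p, fun p _ _ => s2_s2 p, fun p => rfl,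
    ?_, ?_, ?_, fun p _ => rfl, fun p _ => rfl, fun p _ => rfl⟩
  · intro p _ _ _ _
    obtain ⟨f, g, k, e, a, b, c⟩ := p
    simp only [s0, s2]
    rw [Pt.mk.injEq]
    refine ⟨?_, ?_, ?_, ?_, ?_, ?_, ?_⟩ <;> ring
  · intro p
    rw [eq_vert0 p]
    exact octagon _ _ _ _ _ _ _
  · intro p
    -- `p = π q`, and `π` turns the word in `s₁, s₂` at `p` into the same word in `s₁, s₀` at `q`
    obtain ⟨q, rfl⟩ : ∃ q, p = pr q := ⟨pr p, rfl⟩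
    rw [eq_vert0 q]
    simp only [← pr_s0, ← pr_s1]
    intro h0 h1 h2 h3 h4 h5 h6 h7
    exact congrArg pr (octagon_reverse _ _ _ _ _ _ _ h0 h1 h2 h3 h4 h5 h6 h7)
end
end

section
/- Fix complex numbers β0, β1, β2 with β0+2β1+β2 = 1, a constant η ∈ ℂ, η ≠ 0, and a point (f0, f1, f2) ∈ ℂ³. For a ∈ ℂ, a ≠ 0, let V_a(f0,f1,f2) ∈ ℂ³ denote the right-hand side of the symmetric Painlevé V system with φ = -2 and parameters α0 = β0, α1 = -η/a, α2 = β2, α3 = 2β1 + η/a. Then as a → 0, V_a(f0,f1,f2) converges to the right-hand side of the symmetric Painlevé III system with parameters (α0,α1,α2) = (β0,β1,β2) and constant -η in place of η, namely to (-2f0f1f2 + (β0+2β1)f0 - β0f2, (f0+f2)f1² - 2β1f1 - η, -2f0f1f2 + (2β1+β2)f2 - β2f0). (Since the constant in the symmetric Painlevé III system is a nonzero parameter which can be fixed arbitrarily, this is the degeneration of the type A3^(1) system to the type C2^(1) system.) -/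
/-!
For `a ≠ 0` the poles of `α1 = -η/a` and `α3 = 2β1 + η/a` cancel: they enter the field only
through `α1 + α3 = 2β1` and `a α1 = -η`. So on the punctured plane the Painlevé V field agrees
with a field polynomial in `a`, and the limit is the value of the latter at `a = 0`.
-/

noncomputable section
open Filter Topology

/-- The right-hand side of the symmetric Painlevé V system, as a point of `ℂ³`. -/
def pvRHS (a phi a0 a1 a2 a3 f0 f1 f2 : ℂ) : ℂ × ℂ × ℂ :=
  (-(phi/2)*(-2*f0*f1*f2 + a*f0*f2 + (a0+a1+a3)*f0 - a0*f2),
   (phi/2)*(-f0*f1^2 - f1^2*f2 + a*f0*f1 + a*f1*f2 - a*a1 + (a1+a3)*f1),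
   -(phi/2)*(-2*f0*f1*f2 + a*f0*f2 + (a1+a2+a3)*f2 - a2*f0))

/-- The right-hand side of the symmetric Painlevé III system, as a point of `ℂ³`. -/
def piiiRHS (eta a0 a1 a2 f0 f1 f2 : ℂ) : ℂ × ℂ × ℂ :=
  (-2*f0*f1*f2 + (a0+2*a1)*f0 - a0*f2,
   (f0+f2)*f1^2 - 2*a1*f1 + eta,
   -2*f0*f1*f2 + (2*a1+a2)*f2 - a2*f0)

/-- as `a → 0`, the right-hand side of the symmetric Painlevé V system
with `φ = -2` and parameters `α0 = β0`, `α1 = -η/a`, `α2 = β2`, `α3 = 2β1 + η/a`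
converges to the right-hand side of the symmetric Painlevé III system with parameters
`(β0, β1, β2)` and constant `-η`: the degeneration of the `A₃⁽¹⁾` system to the
`C₂⁽¹⁾` system. -/
theorem statement19 (b0 b1 b2 eta f0 f1 f2 : ℂ) (heta : eta ≠ 0)
    (hsum : b0 + 2*b1 + b2 = 1) :
    Filter.Tendsto
      (fun a : ℂ => pvRHS a (-2) b0 (-eta/a) b2 (2*b1 + eta/a) f0 f1 f2)
      (𝓝[≠] (0:ℂ))
      (𝓝 (piiiRHS (-eta) b0 b1 b2 f0 f1 f2)) := by
  have hcont : Continuous (fun a : ℂ =>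
      ((-2*f0*f1*f2 + a*f0*f2 + (b0+2*b1)*f0 - b0*f2,
        (f0+f2)*f1^2 - a*f0*f1 - a*f1*f2 - 2*b1*f1 - eta,
        -2*f0*f1*f2 + a*f0*f2 + (2*b1+b2)*f2 - b2*f0) : ℂ × ℂ × ℂ)) := by
    fun_prop
  have hlim := (hcont.tendsto 0).mono_left (nhdsWithin_le_nhds (s := {0}ᶜ))
  have hval : piiiRHS (-eta) b0 b1 b2 f0 f1 f2 =
      (-2*f0*f1*f2 + 0*f0*f2 + (b0+2*b1)*f0 - b0*f2,
        (f0+f2)*f1^2 - 0*f0*f1 - 0*f1*f2 - 2*b1*f1 - eta,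
        -2*f0*f1*f2 + 0*f0*f2 + (2*b1+b2)*f2 - b2*f0) := by
    simp only [piiiRHS, Prod.mk.injEq]
    refine ⟨?_, ?_, ?_⟩ <;> ring
  rw [hval]
  refine hlim.congr' ?_
  filter_upwards [self_mem_nhdsWithin] with a ha
  have ha0 : a ≠ 0 := ha
  have hmul : a * (-eta/a) = -eta := mul_div_cancel₀ (-eta) ha0
  simp only [pvRHS, hmul, Prod.mk.injEq]
  refine ⟨?_, ?_, ?_⟩ <;> ring
end
end
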